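/- Let (X,d) be a finite metric space with n = |X| ≥ 2 points. Then for every natural number k with k ≤ n − 2: ∑_{x,y ∈ X} ∑_{τ ∈ Perm(X), τ(y) = x} (-1)^{c(τ)} · ( ∑_{v ≠ y} d(v, τ(v)) )^k = 0, where c(τ) is the number of orbits of τ on X (cycles including fixed points). -/

import Mathlib

attribute [local instance] Classical.propDecidable

/-- The number of orbits of a permutation `σ` on a finite type `I`, i.e. the number of
cycles in the cycle decomposition of `σ`, counting fixed points as cycles of length one. -/
noncomputable def orbitCount {I : Type*} [Fintype I] (σ : Equiv.Perm I) : ℕ :=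
  Multiset.card σ.cycleType + (Fintype.card I - σ.support.card)

theorem neg_one_pow_orbitCount {I : Type*} [Fintype I] (σ : Equiv.Perm I) :
    (-1 : ℝ) ^ orbitCount σ = (-1) ^ Fintype.card I * ((Equiv.Perm.sign σ : ℤ) : ℝ) := by
  have hle : σ.support.card ≤ Fintype.card I := Finset.card_le_univ _
  obtain ⟨m, hm⟩ := Nat.exists_eq_add_of_le hle
  have hsq : (-1 : ℝ) ^ σ.support.card * (-1) ^ σ.support.card = 1 := by
    rw [← mul_pow]; simp
  rw [Equiv.Perm.sign_of_cycleType, Equiv.Perm.sum_cycleType, orbitCount, hm,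
    Nat.add_sub_cancel_left]
  push_cast
  rw [pow_add, pow_add, pow_add]
  linear_combination -((-1 : ℝ) ^ σ.cycleType.card * (-1) ^ m) * hsq

/-- A signed sum over permutations vanishes when the summand does not depend on the values of the
permutation at two distinct points `y` and `z`. -/
theorem sum_sign_mul_eq_zero_of_mul_swap {I : Type*} [Fintype I] [DecidableEq I] {y z : I}
    (hyz : y ≠ z) (F : Equiv.Perm I → ℝ) (hF : ∀ τ, F (τ * Equiv.swap y z) = F τ) :
    ∑ τ : Equiv.Perm I, ((Equiv.Perm.sign τ : ℤ) : ℝ) * F τ = 0 := by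
  have h := Equiv.sum_comp (Equiv.mulRight (Equiv.swap y z))
    (fun τ : Equiv.Perm I => ((Equiv.Perm.sign τ : ℤ) : ℝ) * F τ)
  simp only [Equiv.coe_mulRight, hF, Equiv.Perm.sign_mul, Equiv.Perm.sign_swap hyz, mul_neg,
    mul_one, Units.val_neg, Int.cast_neg, neg_mul, Finset.sum_neg_distrib] at h
  linarith

/-- The signed `k`-th moment of `∑ v ≠ y, w v (τ v)` vanishes for `k + 2 ≤ |I|`. -/
theorem sum_sign_mul_sum_erase_pow_eq_zero {I : Type*} [Fintype I] [DecidableEq I]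
    (w : I → I → ℝ) (y : I) {k : ℕ} (hk : k + 2 ≤ Fintype.card I) :
    ∑ τ : Equiv.Perm I, ((Equiv.Perm.sign τ : ℤ) : ℝ) *
      (∑ v ∈ Finset.univ.erase y, w v (τ v)) ^ k = 0 := by
  simp only [Finset.sum_pow', Finset.mul_sum]
  rw [Finset.sum_comm]
  refine Finset.sum_eq_zero fun p hp => ?_
  have hpy : ∀ i, p i ≠ y := by simpa [Fintype.mem_piFinset] using hp
  obtain ⟨z, hz⟩ : ∃ z, z ∉ insert y (Finset.univ.image p) := by
    by_contra! h
    have h₁ := Finset.card_insert_le y (Finset.univ.image p)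
    have h₂ : (Finset.univ.image p).card ≤ k := Finset.card_image_le.trans (by simp)
    rw [Finset.eq_univ_iff_forall.2 h, Finset.card_univ] at h₁
    omega
  simp only [Finset.mem_insert, Finset.mem_image, Finset.mem_univ, true_and, not_or,
    not_exists] at hz
  refine sum_sign_mul_eq_zero_of_mul_swap (Ne.symm hz.1) _ fun τ => ?_
  refine Finset.prod_congr rfl fun i _ => ?_
  rw [Equiv.Perm.mul_apply, Equiv.swap_apply_of_ne_of_ne (hpy i) (hz.2 i)]

theorem stmt15 {X : Type*} [MetricSpace X] [Fintype X]
    (hn : 2 ≤ Fintype.card X) (k : ℕ) (hk : k ≤ Fintype.card X - 2) :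
    ∑ x : X, ∑ y : X,
      ∑ τ ∈ Finset.univ.filter (fun τ : Equiv.Perm X => τ y = x),
        (-1 : ℝ) ^ (orbitCount τ) *
          (∑ v ∈ Finset.univ.erase y, dist v (τ v)) ^ k = 0 := by
  rw [Finset.sum_comm]
  refine Finset.sum_eq_zero fun y _ => ?_
  rw [Finset.sum_fiberwise Finset.univ (fun τ : Equiv.Perm X => τ y)]
  simp only [neg_one_pow_orbitCount, mul_assoc, ← Finset.mul_sum]
  rw [sum_sign_mul_sum_erase_pow_eq_zero dist y (by omega), mul_zero]
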